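/- With the construction below, for all subsets I, J ⊆ {1,...,n} with I ≠ J, one has ∑_{i∈I} a_i ≠ ∑_{j∈J} a_j (Chvátal's condition (c)); that is, all 2^n subset sums of a₁, ..., a_n are distinct. -/

import Mathlib

/-!
If `aᵢ` is close to `t * wᵢ`, then a difference of two disjoint subset sums of the `aᵢ` is close to
`t` times the same difference for the `wᵢ`, so it cannot vanish when the total error is below `t`
times the gap `ε` of the weights. With `t = c * x`, rounding `wᵢ * x` down costs at most `c`, and
the additional `0` or `1` has the opposite sign, so each error is at most `c` and the total is at
most `c * n < t * ε`.

The gap is positive for `wᵢ = -log (1 - 1 / pᵢ)`: an equality of subset sums becomes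
`∏_I (pᵢ - 1) * ∏_J pⱼ = ∏_J (pⱼ - 1) * ∏_I pᵢ`, and the largest prime occurring divides only one
side.
-/

open Finset

variable {ι : Type*}

/-- A family is sum-distinct when its finite subset sums are pairwise distinct; this is the version
of `AddDissociated` for indexed families, so that repeated values count as repeated sums. -/
def SumDistinct {M : Type*} [AddCommMonoid M] (f : ι → M) : Prop :=
  Function.Injective fun S : Finset ι => ∑ i ∈ S, f i

/-- The distances between sums over two disjoint index sets, not both empty; the least element is
the gap `ε` of the weights `w`. -/
def subsetSumGaps [DecidableEq ι] (w : ι → ℝ) : Set ℝ :=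
  {d | ∃ I J : Finset ι, Disjoint I J ∧ (I ∪ J).Nonempty ∧ d = |∑ i ∈ I, w i - ∑ j ∈ J, w j|}

section SumDistinct

variable {M N : Type*}

theorem SumDistinct.of_map [AddCommMonoid M] [AddCommMonoid N] {f : ι → M} (g : M →+ N)
    (h : SumDistinct fun i => g (f i)) : SumDistinct f := fun I J hIJ =>
  h <| by simpa only [map_sum] using congrArg g hIJ

theorem sumDistinct_of_disjoint [DecidableEq ι] [AddCancelCommMonoid M] {f : ι → M}
    (h : ∀ I J : Finset ι, Disjoint I J → (I ∪ J).Nonempty → ∑ i ∈ I, f i ≠ ∑ j ∈ J, f j) :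
    SumDistinct f := by
  intro I J hIJ
  by_contra hne
  exact h (I \ J) (J \ I) disjoint_sdiff_sdiff (symmDiff_nonempty.2 hne)
    (sum_sdiff_eq_sum_sdiff_iff.2 hIJ)

end SumDistinct

section Gap

variable [DecidableEq ι] {w : ι → ℝ} {ε : ℝ}

theorem SumDistinct.pos_of_mem_subsetSumGaps (hw : SumDistinct w) (hε : ε ∈ subsetSumGaps w) :
    0 < ε := by
  obtain ⟨I, J, hdisj, hne, rfl⟩ := hε
  refine abs_pos.2 (sub_ne_zero.2 fun hsum => ?_)
  obtain rfl : I = J := hw hsum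
  simp_all

theorem le_of_mem_lowerBounds_subsetSumGaps (hε : ε ∈ lowerBounds (subsetSumGaps w)) {i : ι}
    (hi : 0 ≤ w i) : ε ≤ w i :=
  hε ⟨{i}, ∅, by simp, by simp, by simp [abs_of_nonneg hi]⟩

theorem sumDistinct_of_sum_abs_sub_lt [Fintype ι] {a : ι → ℝ} {t : ℝ}
    (hε : ε ∈ lowerBounds (subsetSumGaps w)) (ht : 0 ≤ t)
    (ha : ∑ i, |a i - t * w i| < t * ε) : SumDistinct a := by
  refine sumDistinct_of_disjoint fun I J hdisj hne hsum => ha.not_ge ?_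
  have herror (S : Finset ι) : |∑ i ∈ S, a i - t * ∑ i ∈ S, w i| ≤ ∑ i ∈ S, |a i - t * w i| := by
    rw [mul_sum, ← sum_sub_distrib]
    exact abs_sum_le_sum_abs _ _
  calc t * ε
      ≤ t * |∑ i ∈ I, w i - ∑ j ∈ J, w j| := by gcongr; exact hε ⟨I, J, hdisj, hne, rfl⟩
    _ = |t * ∑ i ∈ I, w i - t * ∑ j ∈ J, w j| := by rw [← mul_sub, abs_mul, abs_of_nonneg ht]
    _ ≤ |∑ i ∈ I, a i - t * ∑ i ∈ I, w i| + |∑ j ∈ J, a j - t * ∑ j ∈ J, w j| := by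
        rw [hsum, abs_sub_comm (∑ j ∈ J, a j) (t * ∑ i ∈ I, w i)]
        exact abs_sub_le _ _ _
    _ ≤ ∑ i ∈ I, |a i - t * w i| + ∑ j ∈ J, |a j - t * w j| := add_le_add (herror I) (herror J)
    _ = ∑ i ∈ I ∪ J, |a i - t * w i| := (sum_union hdisj).symm
    _ ≤ ∑ i, |a i - t * w i| :=
        sum_le_sum_of_subset_of_nonneg (subset_univ _) fun _ _ _ => abs_nonneg _

end Gap

section Rounding

theorem abs_natCast_sub_mul_le {y : ℝ} (hy : 0 ≤ y) {c m : ℕ}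
    (hm : m ∈ Set.Icc (c * ⌊y⌋₊) (c * (⌊y⌋₊ + 1))) : |(m : ℝ) - c * y| ≤ c := by
  have hlower : (c * ⌊y⌋₊ : ℝ) ≤ m := by exact_mod_cast hm.1
  have hupper : (m : ℝ) ≤ c * (⌊y⌋₊ + 1) := by exact_mod_cast hm.2
  have hfloor : (c * ⌊y⌋₊ : ℝ) ≤ c * y := by gcongr; exact Nat.floor_le hy
  have hceil : (c * y : ℝ) ≤ c * (⌊y⌋₊ + 1) := by gcongr; exact (Nat.lt_floor_add_one y).le
  rw [abs_le]
  constructor <;> linarith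

variable [Fintype ι] [DecidableEq ι] {w : ι → ℝ} {ε x : ℝ}

theorem lcm_natFloor_mul_ne_zero (hw : ∀ i, 0 ≤ w i) (hε₀ : 0 < ε)
    (hε : ε ∈ lowerBounds (subsetSumGaps w)) (hx : Fintype.card ι / ε < x) (s : Finset ι) :
    s.lcm (fun i => ⌊w i * x⌋₊) ≠ 0 := by
  rw [Ne, Finset.lcm_eq_zero_iff]
  rintro ⟨i, -, hi⟩
  refine (Nat.floor_pos.2 ?_).ne' hi
  have hx₀ : 0 < x := hx.trans_le' (by positivity)
  calc (1 : ℝ) ≤ Fintype.card ι := by exact_mod_cast Fintype.card_pos_iff.2 ⟨i⟩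
    _ ≤ ε * x := ((div_lt_iff₀' hε₀).1 hx).le
    _ ≤ w i * x := by gcongr; exact le_of_mem_lowerBounds_subsetSumGaps hε (hw i)

theorem chvatal_condition_c_general (hw : ∀ i, 0 ≤ w i) (hε₀ : 0 < ε)
    (hε : ε ∈ lowerBounds (subsetSumGaps w)) (hx : Fintype.card ι / ε < x)
    {c : ℕ} (hc : c ≠ 0) {a : ι → ℕ}
    (ha : ∀ i, a i ∈ Set.Icc (c * ⌊w i * x⌋₊) (c * (⌊w i * x⌋₊ + 1))) : SumDistinct a := by
  have hx₀ : 0 < x := hx.trans_le' (by positivity)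
  have herror (i : ι) : |(a i : ℝ) - c * x * w i| ≤ c := by
    rw [mul_assoc, mul_comm x]
    exact abs_natCast_sub_mul_le (mul_nonneg (hw i) hx₀.le) (ha i)
  refine .of_map (Nat.castAddMonoidHom ℝ) (sumDistinct_of_sum_abs_sub_lt hε (t := c * x) ?_ ?_)
  · positivity
  · calc ∑ i, |(a i : ℝ) - c * x * w i|
        ≤ Fintype.card ι * c := by
          simpa using sum_le_card_nsmul univ _ (c : ℝ) fun i _ => herror i
      _ < x * ε * c := by gcongr; exact (div_lt_iff₀ hε₀).1 hx
      _ = c * x * ε := by ring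

end Rounding

section PrimeWeights

theorem one_sub_one_div_pos {y : ℝ} (hy : 1 < y) : 0 < 1 - 1 / y :=
  sub_pos.2 ((div_lt_one (one_pos.trans hy)).2 hy)

theorem neg_log_one_sub_one_div_pos {y : ℝ} (hy : 1 < y) : 0 < -Real.log (1 - 1 / y) :=
  neg_pos.2 <| Real.log_neg (one_sub_one_div_pos hy) (sub_lt_self 1 (by positivity))

theorem exp_neg_sum_neg_log_mul_prod {p : ι → ℕ} (hp : ∀ i, 1 < p i) (S : Finset ι) :
    Real.exp (-∑ i ∈ S, -Real.log (1 - 1 / (p i : ℝ))) * (∏ i ∈ S, p i : ℕ)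
      = (∏ i ∈ S, (p i - 1) : ℕ) := by
  rw [sum_neg_distrib, neg_neg, Real.exp_sum, Nat.cast_prod, Nat.cast_prod, ← prod_mul_distrib]
  refine prod_congr rfl fun i _ => ?_
  have hpi : (1 : ℝ) < p i := by exact_mod_cast hp i
  rw [Real.exp_log (one_sub_one_div_pos hpi), Nat.cast_pred (one_pos.trans (hp i)), sub_mul,
    one_mul, one_div_mul_cancel (one_pos.trans hpi).ne']

theorem prod_sub_one_mul_prod_eq_of_sum_neg_log_eq {p : ι → ℕ} (hp : ∀ i, 1 < p i)
    {I J : Finset ι}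
    (h : ∑ i ∈ I, -Real.log (1 - 1 / (p i : ℝ)) = ∑ j ∈ J, -Real.log (1 - 1 / (p j : ℝ))) :
    (∏ i ∈ I, (p i - 1)) * ∏ j ∈ J, p j = (∏ j ∈ J, (p j - 1)) * ∏ i ∈ I, p i := by
  rw [← Nat.cast_inj (R := ℝ), Nat.cast_mul, Nat.cast_mul, ← exp_neg_sum_neg_log_mul_prod hp I,
    ← exp_neg_sum_neg_log_mul_prod hp J, h]
  ring

theorem not_dvd_prod_sub_one {p : ι → ℕ} {q : ℕ} (hq : q.Prime) {S : Finset ι}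
    (hp : ∀ i ∈ S, 1 < p i) (hle : ∀ i ∈ S, p i ≤ q) : ¬q ∣ ∏ i ∈ S, (p i - 1) :=
  hq.prime.not_dvd_finsetProd fun i hi =>
    Nat.not_dvd_of_pos_of_lt (Nat.sub_pos_of_lt (hp i hi)) <|
      (Nat.sub_lt (one_pos.trans (hp i hi)) one_pos).trans_le (hle i hi)

theorem not_dvd_prod_of_notMem {p : ι → ℕ} (hp : ∀ i, (p i).Prime) (hinj : Function.Injective p)
    {S : Finset ι} {k : ι} (hk : k ∉ S) : ¬p k ∣ ∏ i ∈ S, p i :=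
  (hp k).prime.not_dvd_finsetProd fun i hi hdvd =>
    hk (hinj ((Nat.prime_dvd_prime_iff_eq (hp k) (hp i)).1 hdvd) ▸ hi)

theorem prod_sub_one_mul_prod_ne [DecidableEq ι] {p : ι → ℕ} (hp : ∀ i, (p i).Prime)
    (hinj : Function.Injective p) {I J : Finset ι} (hdisj : Disjoint I J)
    (hne : (I ∪ J).Nonempty) :
    (∏ i ∈ I, (p i - 1)) * ∏ j ∈ J, p j ≠ (∏ j ∈ J, (p j - 1)) * ∏ i ∈ I, p i := by
  obtain ⟨k, hk, hmax⟩ := exists_max_image (I ∪ J) p hne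
  wlog hkI : k ∈ I generalizing I J
  · rw [union_comm] at hne hk hmax
    exact (this hdisj.symm hne hk hmax ((mem_union.1 hk).resolve_right hkI)).symm
  intro heq
  have hdvd : p k ∣ (∏ i ∈ I, (p i - 1)) * ∏ j ∈ J, p j :=
    heq ▸ (dvd_prod_of_mem p hkI).mul_left _
  rcases (hp k).dvd_mul.1 hdvd with hdvd | hdvd
  · exact not_dvd_prod_sub_one (hp k) (fun i _ => (hp i).one_lt)
      (fun i hi => hmax i (mem_union_left J hi)) hdvd
  · exact not_dvd_prod_of_notMem hp hinj (disjoint_left.1 hdisj hkI) hdvd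

theorem sumDistinct_neg_log_one_sub_one_div {p : ι → ℕ} (hp : ∀ i, (p i).Prime)
    (hinj : Function.Injective p) : SumDistinct fun i => -Real.log (1 - 1 / (p i : ℝ)) := by
  classical
  exact sumDistinct_of_disjoint fun I J hdisj hne hsum =>
    prod_sub_one_mul_prod_ne hp hinj hdisj hne
      (prod_sub_one_mul_prod_eq_of_sum_neg_log_eq (fun i => (hp i).one_lt) hsum)

end PrimeWeights

open Finset in
/-- Chvátal's condition (c): all `2^n` subset sums of the `aᵢ` are distinct. -/
theorem chvatal_condition_c
    (n : ℕ) (hn : 1 ≤ n)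
    (p : Fin n → ℕ) (hp : ∀ i, (p i).Prime) (hinj : Function.Injective p)
    (w : Fin n → ℝ) (hw : ∀ i, w i = -Real.log (1 - 1 / (p i : ℝ)))
    (hmono : ∀ i j : Fin n, i ≤ j → w j ≤ w i)
    (hratio : w ⟨0, by omega⟩ ≤ 2 * w ⟨n - 1, by omega⟩)
    (ε : ℝ)
    (hε : IsLeast {d : ℝ | ∃ I J : Finset (Fin n), Disjoint I J ∧ (I ∪ J).Nonempty ∧
        d = |∑ i ∈ I, w i - ∑ j ∈ J, w j|} ε)
    (x : ℝ) (hx : 4 * n / ε < x)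
    (c : ℕ)
    (hc : c = ((Finset.univ : Finset (Fin n)).filter fun i : Fin n => (i : ℕ) < n / 2).lcm
        fun i => (⌊w i * x⌋).toNat)
    (a : Fin n → ℕ)
    (ha : ∀ i : Fin n, a i = if (i : ℕ) < n / 2 then c * (⌊w i * x⌋).toNat
        else c * (⌊w i * x⌋).toNat + 1)
    : ∀ I J : Finset (Fin n), I ≠ J → ∑ i ∈ I, a i ≠ ∑ j ∈ J, a j := by
  obtain rfl : w = fun i => -Real.log (1 - 1 / (p i : ℝ)) := funext hw
  have hw₀ (i : Fin n) : 0 ≤ -Real.log (1 - 1 / (p i : ℝ)) :=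
    (neg_log_one_sub_one_div_pos (by exact_mod_cast (hp i).one_lt)).le
  have hε₀ : 0 < ε :=
    (sumDistinct_neg_log_one_sub_one_div hp hinj).pos_of_mem_subsetSumGaps hε.1
  have hx' : Fintype.card (Fin n) / ε < x := by
    refine hx.trans_le' ?_
    rw [Fintype.card_fin]
    gcongr
    linarith [n.cast_nonneg (α := ℝ)]
  simp only [Int.floor_toNat] at hc ha
  have hc₀ : c ≠ 0 := hc ▸ lcm_natFloor_mul_ne_zero hw₀ hε₀ hε.2 hx' _
  refine fun I J => (chvatal_condition_c_general hw₀ hε₀ hε.2 hx' hc₀ fun i => ?_).ne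
  rw [ha, mul_add_one]
  split_ifs <;> constructor <;> omega
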